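/- For every integer h ≥ 1, the specializations of the denominator polynomial Q_h satisfy Q_h(0,1;q,t) = Σ_{m≥0} (−t)^m q^{m²} [h−m choose m]_q and Q_h(1,1;q,t) = Σ_{m≥0} (−t)^m q^{m(m-1)} [h+1−m choose m]_q, where both sums are finite since the q-binomial coefficients vanish for large m. -/

import Mathlib

/-! Both right-hand sides have the shape `qSum e s = Σ_m (-t)^m q^{e m} [s - m, m]`, with
`e m = m²`, `s = h` in the first case and `e m = m (m - 1)`, `s = h + 1` in the second.
The q-Pascal rule `[s+2-(m+1), m+1] = [s+1-(m+1), m+1] + q^{s-2m} [s-m, m]` (`qbinom_pascal`) is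
multiplied by `(-t)^{m+1} q^{e (m+1)}` and summed over `m`. For these two choices of `e`, the
exponent `e (m+1) + (s - 2m)` equals `e m + r` with `r` independent of `m`, and the result is
`qSum e (s+2) = qSum e (s+1) - q^r t qSum e s` (`qSum_rec`). This is the recurrence defining
`Q_h(a,1)`, and the initial values at `h = 1, 2` agree. -/

/-! Statement 15: for every `h ≥ 1`,
`Q_h(0,1;q,t) = Σ_{m≥0} (−t)^m q^{m²} [h−m choose m]_q` and
`Q_h(1,1;q,t) = Σ_{m≥0} (−t)^m q^{m(m-1)} [h+1−m choose m]_q`,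
both sums being finite since the q-binomial coefficients vanish for large `m`. -/

open Finset PowerSeries

noncomputable section

/-- The field of rational functions in the four variables `a`, `b`, `q`, `t`. -/
abbrev K : Type := FractionRing (MvPolynomial (Fin 4) ℚ)

/-- The indeterminate `a`. -/
def av : K := algebraMap (MvPolynomial (Fin 4) ℚ) K (MvPolynomial.X 0)
/-- The indeterminate `b`. -/
def bv : K := algebraMap (MvPolynomial (Fin 4) ℚ) K (MvPolynomial.X 1)
/-- The indeterminate `q`. -/
def qv : K := algebraMap (MvPolynomial (Fin 4) ℚ) K (MvPolynomial.X 2)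
/-- The indeterminate `t`. -/
def tv : K := algebraMap (MvPolynomial (Fin 4) ℚ) K (MvPolynomial.X 3)

/-- The polynomials `Q_h(a,1;q,t)`: `Q_1 = 1 - a t`, `Q_2 = 1 - a t - q t`, and
`Q_h = Q_{h-1}(a,1) - q^{h-1} t Q_{h-2}(a,1)` for `h ≥ 3`.
(The value at `h = 0` is an unused placeholder.) -/
def Qone (a : K) : ℕ → K
  | 0 => 1
  | 1 => 1 - a * tv
  | 2 => 1 - a * tv - qv * tv
  | n + 3 => Qone a (n + 2) - qv ^ (n + 2) * tv * Qone a (n + 1)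

/-- The denominator polynomials `Q_h(a,b;q,t)`: `Q_1 = 1 - a b t`,
`Q_2 = 1 - a t - b q t`, and for `h ≥ 3`,
`Q_h(a,b;q,t) = Q_{h-1}(a,1;q,t) - b q^{h-1} t · Q_{h-2}(a,1;q,t)`.
(The value at `h = 0` is an unused placeholder.) -/
def Qden (a b : K) : ℕ → K
  | 0 => 1
  | 1 => 1 - a * b * tv
  | 2 => 1 - a * tv - b * qv * tv
  | n + 3 => Qone a (n + 2) - b * qv ^ (n + 2) * tv * Qone a (n + 1)

/-- `W(z;a,b;q,t) = Σ_{h≥1} Q_h(a,b;q,t) z^h`, a formal power series in `z`. -/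
def W (a b : K) : PowerSeries K :=
  PowerSeries.mk fun h => if h = 0 then 0 else Qden a b h

/-- The q-Pochhammer symbol `(q;q)_n = ∏_{i=0}^{n-1} (1 - q·q^i)`. -/
def qPochQQ (n : ℕ) : K := ∏ i ∈ Finset.range n, (1 - qv * qv ^ i)

/-- The q-binomial coefficient `[n choose k]_q = (q;q)_n/((q;q)_k (q;q)_{n-k})` for
`0 ≤ k ≤ n`, and `0` whenever `k < 0` or `k > n`. -/
def qbinom (n k : ℤ) : K :=
  if 0 ≤ k ∧ k ≤ n then
    qPochQQ n.toNat / (qPochQQ k.toNat * qPochQQ (n - k).toNat)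
  else 0

lemma one_sub_qv_pow_ne_zero (i : ℕ) : 1 - qv * qv ^ i ≠ 0 := by
  intro h
  have h1 : algebraMap (MvPolynomial (Fin 4) ℚ) K
      (1 - MvPolynomial.X 2 * MvPolynomial.X 2 ^ i) = 0 := by
    rw [← h]; simp [qv]
  have h2 := (map_eq_zero_iff _ (IsFractionRing.injective (MvPolynomial (Fin 4) ℚ) K)).1 h1
  -- evaluating all variables at `0` turns `1 - q^{i+1}` into `1`
  have h3 := congrArg (MvPolynomial.eval (fun _ => (0 : ℚ))) h2
  simp at h3

lemma qPochQQ_succ (n : ℕ) : qPochQQ (n + 1) = qPochQQ n * (1 - qv * qv ^ n) :=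
  Finset.prod_range_succ _ _

lemma qPochQQ_ne_zero (n : ℕ) : qPochQQ n ≠ 0 :=
  Finset.prod_ne_zero_iff.2 fun i _ => one_sub_qv_pow_ne_zero i

lemma qPochQQ_zero : qPochQQ 0 = 1 := Finset.prod_range_zero _

lemma qbinom_eq_zero {n k : ℤ} (h : n < k) : qbinom n k = 0 :=
  if_neg fun H => absurd H.2 (not_le.2 h)

lemma qbinom_add (k d : ℕ) :
    qbinom ((k : ℤ) + d) k = qPochQQ (k + d) / (qPochQQ k * qPochQQ d) := by
  have h1 : ((k : ℤ) + d).toNat = k + d := by omega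
  have h2 : ((k : ℤ) + d - k).toNat = d := by omega
  rw [qbinom, if_pos (by omega), h1, h2, Int.toNat_natCast]

lemma qbinom_self (k : ℕ) : qbinom k k = 1 := by
  have := qbinom_add k 0
  have := qPochQQ_ne_zero k
  simp_all [qPochQQ_zero]

lemma qbinom_zero_right (n : ℕ) : qbinom n 0 = 1 := by
  have := qbinom_add 0 n
  have := qPochQQ_ne_zero n
  simp_all [qPochQQ_zero]

/-- The q-Pascal rule along the diagonals `[s - m, m]`. The truncated subtraction `s - 2 * m` is
harmless: for `s < 2 * m` all three coefficients vanish. -/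
lemma qbinom_pascal (s m : ℕ) :
    qbinom (((s + 2 : ℕ) : ℤ) - (m + 1 : ℕ)) (m + 1 : ℕ)
      = qbinom (((s + 1 : ℕ) : ℤ) - (m + 1 : ℕ)) (m + 1 : ℕ)
        + qv ^ (s - 2 * m) * qbinom ((s : ℤ) - m) m := by
  rcases lt_trichotomy s (2 * m) with h | h | h
  · rw [qbinom_eq_zero (by omega), qbinom_eq_zero (by omega), qbinom_eq_zero (by omega)]
    simp
  · rw [qbinom_eq_zero (n := ((s + 1 : ℕ) : ℤ) - (m + 1 : ℕ)) (by omega),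
      show ((s + 2 : ℕ) : ℤ) - (m + 1 : ℕ) = (m + 1 : ℕ) by omega,
      show (s : ℤ) - m = m by omega, qbinom_self, qbinom_self]
    simp [h]
  · obtain ⟨d, rfl⟩ : ∃ d, s = 2 * m + (d + 1) := ⟨s - 2 * m - 1, by omega⟩
    rw [show ((2 * m + (d + 1) + 2 : ℕ) : ℤ) - (m + 1 : ℕ) = (m + 1 : ℕ) + (d + 1 : ℕ) by omega,
      show ((2 * m + (d + 1) + 1 : ℕ) : ℤ) - (m + 1 : ℕ) = (m + 1 : ℕ) + (d : ℕ) by omega,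
      show ((2 * m + (d + 1) : ℕ) : ℤ) - m = m + (d + 1 : ℕ) by omega,
      qbinom_add, qbinom_add, qbinom_add, Nat.add_sub_cancel_left,
      show m + 1 + (d + 1) = (m + d + 1) + 1 by ring, show m + 1 + d = m + d + 1 by ring,
      show m + (d + 1) = m + d + 1 by ring, qPochQQ_succ (m + d + 1), qPochQQ_succ m,
      qPochQQ_succ d]
    have h1 := qPochQQ_ne_zero m
    have h2 := qPochQQ_ne_zero d
    have h3 := one_sub_qv_pow_ne_zero m
    have h4 := one_sub_qv_pow_ne_zero d
    field_simp
    ring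

/-- The sum `Σ_m (-t)^m q^{e m} [s - m, m]`, with an arbitrary exponent function `e`. -/
def qSum (e : ℕ → ℕ) (s : ℕ) : K :=
  ∑ᶠ m : ℕ, (-tv) ^ m * qv ^ e m * qbinom ((s : ℤ) - m) (m : ℤ)

lemma qSum_eq_sum (e : ℕ → ℕ) {s N : ℕ} (h : s < 2 * N) :
    qSum e s = ∑ m ∈ Finset.range N, (-tv) ^ m * qv ^ e m * qbinom ((s : ℤ) - m) (m : ℤ) := by
  refine finsum_eq_sum_of_support_subset _ fun m hm => ?_
  by_contra hc
  simp only [Finset.coe_range, Set.mem_Iio, not_lt] at hc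
  exact hm (by simp only [qbinom_eq_zero (show (s : ℤ) - m < m by omega), mul_zero])

lemma qSum_rec (e : ℕ → ℕ) (s r : ℕ)
    (he : ∀ m, 2 * m ≤ s → e (m + 1) + (s - 2 * m) = e m + r) :
    qSum e (s + 2) = qSum e (s + 1) - qv ^ r * tv * qSum e s := by
  rw [qSum_eq_sum e (show s + 2 < 2 * (s + 1 + 1) by omega),
    qSum_eq_sum e (show s + 1 < 2 * (s + 1 + 1) by omega),
    qSum_eq_sum e (show s < 2 * (s + 1) by omega),
    Finset.sum_range_succ', Finset.sum_range_succ' _ (s + 1), Finset.mul_sum,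
    add_sub_right_comm, ← Finset.sum_sub_distrib]
  congr 1
  · refine Finset.sum_congr rfl fun m _ => ?_
    rw [qbinom_pascal]
    by_cases h : 2 * m ≤ s
    · have h1 : qv ^ e (m + 1) * qv ^ (s - 2 * m) = qv ^ e m * qv ^ r := by
        rw [← pow_add, ← pow_add, he m h]
      linear_combination (-tv) ^ (m + 1) * qbinom ((s : ℤ) - m) m * h1
    · rw [qbinom_eq_zero (n := (s : ℤ) - m) (by omega)]
      ring
  · simp only [Nat.cast_zero, sub_zero, qbinom_zero_right]

lemma Qden_one_right (a : K) : ∀ h, Qden a 1 h = Qone a h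
  | 0 => rfl
  | 1 => by simp [Qden, Qone]
  | 2 => by simp [Qden, Qone]
  | n + 3 => by simp [Qden, Qone]

lemma qSum_zero (e : ℕ → ℕ) (h0 : e 0 = 0) : qSum e 0 = 1 := by
  have := qbinom_zero_right 0
  rw [qSum_eq_sum e (N := 1) (by omega)]
  simp_all

lemma qSum_one (e : ℕ → ℕ) (h0 : e 0 = 0) : qSum e 1 = 1 := by
  have := qbinom_zero_right 1
  rw [qSum_eq_sum e (N := 1) (by omega)]
  simp_all

lemma Qone_zero_eq : ∀ h, 1 ≤ h → Qone 0 h = qSum (fun m => m * m) h := by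
  have hr (s : ℕ) := qSum_rec (fun m => m * m) s (s + 1) fun m hm => by
    obtain ⟨d, rfl⟩ := Nat.exists_eq_add_of_le hm
    simp only [Nat.add_sub_cancel_left]
    ring
  intro h
  induction h using Nat.strong_induction_on with
  | _ h ih =>
    intro hh
    match h with
    | 1 => simp [Qone, qSum_one]
    | 2 => simp [Qone, hr 0, qSum_one, qSum_zero]
    | n + 3 => rw [Qone, ih _ (by omega) (by omega), ih _ (by omega) (by omega), hr (n + 1)]

lemma Qone_one_eq : ∀ h, 1 ≤ h → Qone 1 h = qSum (fun m => m * (m - 1)) (h + 1) := by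
  have hr (s : ℕ) := qSum_rec (fun m => m * (m - 1)) s s fun m hm => by
    obtain ⟨d, rfl⟩ := Nat.exists_eq_add_of_le hm
    simp only [Nat.add_sub_cancel_left, Nat.add_sub_cancel]
    cases m with
    | zero => simp
    | succ m => simp only [Nat.add_sub_cancel]; ring
  intro h
  induction h using Nat.strong_induction_on with
  | _ h ih =>
    intro hh
    match h with
    | 1 => simp [Qone, hr 0, qSum_one, qSum_zero]
    | 2 => simp [Qone, hr 1, hr 0, qSum_one, qSum_zero]
    | n + 3 => rw [Qone, ih _ (by omega) (by omega), ih _ (by omega) (by omega), hr (n + 2)]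

/-- For every `h ≥ 1`,
`Q_h(0,1;q,t) = Σ_{m≥0} (−t)^m q^{m²} [h−m, m]_q` and
`Q_h(1,1;q,t) = Σ_{m≥0} (−t)^m q^{m(m-1)} [h+1−m, m]_q`. -/
theorem Q_specializations (h : ℕ) (hh : 1 ≤ h) :
    Qden 0 1 h
        = ∑ᶠ m : ℕ, (-tv) ^ m * qv ^ (m * m) * qbinom ((h : ℤ) - m) (m : ℤ) ∧
    Qden 1 1 h
        = ∑ᶠ m : ℕ, (-tv) ^ m * qv ^ (m * (m - 1)) * qbinom ((h : ℤ) + 1 - m) (m : ℤ) := by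
  refine ⟨?_, ?_⟩
  · rw [Qden_one_right, Qone_zero_eq h hh, qSum]
  · rw [Qden_one_right, Qone_one_eq h hh, qSum]
    simp only [Nat.cast_add, Nat.cast_one]

end
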